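/- Let w₀ be the longest element of the symmetric group Sₙ (the order-reversing permutation), let λ be a partition of N with character χ_λ, and set r = ⌊N/2⌋. Then χ_λ(w₀) = Σ_{i=0}^{r} (−2)^i · C(r,i) · K_{λᵗ, (2^i, 1^{N−2i})}, where K denotes the Kostka number and λᵗ the transpose (conjugate) partition. -/

import Mathlib

open Module

/-- The Kostka number `K_{μ,c}`: the number of semistandard Young tableaux of shape `μ`
whose content is given by the function `c` (the entry `n` occurs `c n` times). -/
noncomputable def kostkaNumber (μ : YoungDiagram) (c : ℕ → ℕ) : ℕ :=
  Nat.card {T : SemistandardYoungTableau μ //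
    ∀ n : ℕ, (μ.cells.filter fun x => T x.1 x.2 = n).card = c n}

/-- The index of the block (with sizes listed by `l`) containing position `m`. -/
def blockIdx (l : List ℕ) (m : ℕ) : ℕ :=
  ((List.range l.length).filter fun j => (l.take (j + 1)).sum ≤ m).length

/-- Membership in the Young subgroup `S_l = S_{l₁} × ⋯ × S_{l_k}` of `S_N`:
the permutation preserves each of the consecutive blocks of sizes `l₁, …, l_k`. -/
def IsInYoungSubgroup (l : List ℕ) {N : ℕ} (σ : Equiv.Perm (Fin N)) : Prop :=
  ∀ k : Fin N, blockIdx l ((σ k : Fin N) : ℕ) = blockIdx l (k : ℕ)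

/-- Irreducibility of a representation: the only invariant subspaces are `⊥` and `⊤`. -/
def Representation.IsIrred {k G V : Type*} [CommSemiring k] [Monoid G] [AddCommMonoid V]
    [Module k V] (ρ : Representation k G V) : Prop :=
  ∀ U : Submodule k V, (∀ g v, v ∈ U → ρ g v ∈ U) → U = ⊥ ∨ U = ⊤

/-- The content `(2^i, 1^{N-2i})`: `i` parts equal to `2` and `N - 2i` parts equal to `1`. -/
def twoOneContent (N i : ℕ) : ℕ → ℕ :=
  fun j => if j < i then 2 else if j < N - i then 1 else 0

/-- Functions on finite types with fibres of the same size differ by a bijection. -/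
lemma exists_equiv_comp_eq_of_card_fiber_eq {α β ι : Type*} [Fintype α] [Fintype β]
    [DecidableEq ι] (f : α → ι) (g : β → ι)
    (h : ∀ i, (Finset.univ.filter fun a => f a = i).card =
      (Finset.univ.filter fun b => g b = i).card) :
    ∃ e : α ≃ β, g ∘ e = f := by
  have key : ∀ i, Nonempty ({a // f a = i} ≃ {b // g b = i}) := fun i => by
    rw [← Fintype.card_eq, Fintype.card_subtype, Fintype.card_subtype]
    exact h i
  let e := fun i => (key i).some
  refine ⟨(Equiv.sigmaFiberEquiv f).symm.trans
    ((Equiv.sigmaCongrRight e).trans (Equiv.sigmaFiberEquiv g)), ?_⟩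
  funext a
  exact (e (f a) ⟨a, rfl⟩).2

namespace YoungDiagram

variable {μ : YoungDiagram}

/-- The permutation `g` of the cells of `μ` maps every cell into its own row. -/
def PreservesRows (g : Equiv.Perm μ.cells) : Prop := ∀ x, (g x).1.1 = x.1.1

/-- The permutation `g` of the cells of `μ` maps every cell into its own column. -/
def PreservesCols (g : Equiv.Perm μ.cells) : Prop := ∀ x, (g x).1.2 = x.1.2

lemma PreservesRows.inv {g : Equiv.Perm μ.cells} (h : PreservesRows g) : PreservesRows g⁻¹ :=
  fun x => by simpa using (h (g⁻¹ x)).symm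

lemma PreservesCols.inv {g : Equiv.Perm μ.cells} (h : PreservesCols g) : PreservesCols g⁻¹ :=
  fun x => by simpa using (h (g⁻¹ x)).symm

lemma PreservesRows.mul {g h : Equiv.Perm μ.cells} (hg : PreservesRows g)
    (hh : PreservesRows h) : PreservesRows (g * h) := fun x => (hg (h x)).trans (hh x)

lemma preservesRows_swap {x y : μ.cells} (h : x.1.1 = y.1.1) :
    PreservesRows (Equiv.swap x y) := fun z => by
  rw [Equiv.swap_apply_def]; split_ifs <;> simp_all

lemma preservesCols_swap {x y : μ.cells} (h : x.1.2 = y.1.2) :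
    PreservesCols (Equiv.swap x y) := fun z => by
  rw [Equiv.swap_apply_def]; split_ifs <;> simp_all

lemma lt_colLen_of_cell (x : μ.cells) : x.1.1 < μ.colLen x.1.2 :=
  mem_iff_lt_colLen.1 (by simp)

lemma card_filter_col_eq (j : ℕ) :
    (Finset.univ.filter fun x : μ.cells => x.1.2 = j).card = μ.colLen j := by
  rw [colLen_eq_card, col, ← Finset.card_map (Function.Embedding.subtype _)]
  congr 1
  ext ⟨a, b⟩
  simp [and_comm]

lemma card_filter_row_eq (i : ℕ) :
    (Finset.univ.filter fun x : μ.cells => x.1.1 = i).card = μ.rowLen i := by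
  rw [rowLen_eq_card, row, ← Finset.card_map (Function.Embedding.subtype _)]
  congr 1
  ext ⟨a, b⟩
  simp [and_comm]

lemma card_filter_col_eq_row_lt (j m : ℕ) :
    (Finset.univ.filter fun x : μ.cells => x.1.2 = j ∧ x.1.1 < m).card =
      min m (μ.colLen j) := by
  rw [← Finset.card_range (min m _)]
  refine Finset.card_bij (fun x _ => x.1.1) ?_ ?_ ?_
  · rintro x hx
    have := lt_colLen_of_cell x
    simp only [Finset.mem_filter, Finset.mem_univ, true_and] at hx
    rw [hx.1] at this
    simp [hx.2, this]
  · rintro x hx y hy h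
    simp only [Finset.mem_filter, Finset.mem_univ, true_and] at hx hy
    exact Subtype.ext (Prod.ext h (hx.1.trans hy.1.symm))
  · intro i hi
    rw [Finset.mem_range, lt_min_iff] at hi
    exact ⟨⟨(i, j), by simpa using mem_iff_lt_colLen.2 hi.2⟩, by simp [hi.1], rfl⟩

/-- A permutation of the cells that never sends two cells of one column into one row moves every
cell to a row which meets the column of that cell. -/
lemma row_lt_colLen_of_separating {g : Equiv.Perm μ.cells}
    (h : ∀ x y : μ.cells, x.1.2 = y.1.2 → (g x).1.1 = (g y).1.1 → x = y) (x : μ.cells) :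
    (g x).1.1 < μ.colLen x.1.2 := by
  set m := μ.colLen x.1.2 with hm
  let J : Finset ℕ := Finset.univ.image fun y : μ.cells => y.1.2
  have le : ∀ j ∈ J, (Finset.univ.filter fun y : μ.cells => y.1.2 = j ∧ (g y).1.1 < m).card ≤
      min m (μ.colLen j) := fun j _ => by
    refine le_min ?_ ?_
    · conv_rhs => rw [← Finset.card_range m]
      refine Finset.card_le_card_of_injOn (fun y => (g y).1.1) (fun y hy => ?_) ?_
      · simp only [Finset.coe_filter, Finset.mem_univ, true_and, Set.mem_ofPred_eq] at hy
        simpa using hy.2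
      · intro y hy z hz hyz
        simp only [Finset.coe_filter, Finset.mem_univ, true_and, Set.mem_ofPred_eq] at hy hz
        exact h y z (hy.1.trans hz.1.symm) hyz
    · rw [← card_filter_col_eq]
      exact Finset.card_le_card fun y => by
        simp only [Finset.mem_filter, Finset.mem_univ, true_and]; exact And.left
  have sum_eq : ∀ p : μ.cells → Prop, ∀ [DecidablePred p],
      (Finset.univ.filter p).card =
        ∑ j ∈ J, (Finset.univ.filter fun y : μ.cells => y.1.2 = j ∧ p y).card := fun p _ => by
    rw [Finset.card_eq_sum_card_fiberwise (f := fun y : μ.cells => y.1.2) (t := J)]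
    · simp only [Finset.filter_filter, and_comm]
    · intro y _
      simp [J]
  have total : (Finset.univ.filter fun y : μ.cells => (g y).1.1 < m).card =
      (Finset.univ.filter fun y : μ.cells => y.1.1 < m).card := by
    refine Finset.card_bij (fun y _ => g y) (by simp) (by simp) fun y hy => ⟨g⁻¹ y, ?_, ?_⟩
    · simpa using hy
    · simp
  rw [sum_eq, sum_eq fun y => y.1.1 < m] at total
  simp only [card_filter_col_eq_row_lt] at total
  have eq := (Finset.sum_eq_sum_iff_of_le le).1 total x.1.2 (Finset.mem_image_of_mem _ (by simp))
  rw [← hm, min_self, hm, ← card_filter_col_eq] at eq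
  have sub := Finset.eq_of_subset_of_card_le (fun y => by
    simp only [Finset.mem_filter, Finset.mem_univ, true_and]; exact And.left) eq.ge
  have mem : x ∈ Finset.univ.filter fun y : μ.cells => y.1.2 = x.1.2 := by simp
  rw [← sub] at mem
  rw [hm, ← card_filter_col_eq]
  exact (Finset.mem_filter.1 mem).2.2

/-- A permutation of the cells that never sends two cells of one column into one row is the
product of a row-preserving and a column-preserving permutation. -/
lemma exists_eq_mul_of_separating {g : Equiv.Perm μ.cells}
    (h : ∀ x y : μ.cells, x.1.2 = y.1.2 → (g x).1.1 = (g y).1.1 → x = y) :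
    ∃ r c : Equiv.Perm μ.cells, PreservesRows r ∧ PreservesCols c ∧ g = r * c := by
  let c₀ : μ.cells → μ.cells := fun x => ⟨((g x).1.1, x.1.2), by
    simpa using mem_iff_lt_colLen.2 (row_lt_colLen_of_separating h x)⟩
  have inj : Function.Injective c₀ := fun x y hxy => by
    have := congrArg Subtype.val hxy
    simp only [c₀, Prod.mk.injEq] at this
    exact h x y this.2 this.1
  let c : Equiv.Perm μ.cells := Equiv.ofBijective c₀ (Finite.injective_iff_bijective.1 inj)
  refine ⟨g * c⁻¹, c, fun x => ?_, fun x => rfl, by simp⟩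
  obtain ⟨y, rfl⟩ := c.surjective x
  simp only [Equiv.Perm.mul_apply, Equiv.Perm.inv_def, Equiv.symm_apply_apply]
  rfl

/-- A filling of the cells of `μ` is column-strict. -/
def ColStrict (T : μ.cells → ℕ) : Prop :=
  ∀ x y : μ.cells, x.1.2 = y.1.2 → x.1.1 < y.1.1 → T x < T y

/-- A filling of the cells of `μ` is weakly increasing along the rows. -/
def RowWeak (T : μ.cells → ℕ) : Prop :=
  ∀ x y : μ.cells, x.1.1 = y.1.1 → x.1.2 < y.1.2 → T x ≤ T y

lemma eq_one_of_preservesCols_of_monotone {c : Equiv.Perm μ.cells} (hc : PreservesCols c)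
    (h : ∀ x y : μ.cells, x.1.2 = y.1.2 → x.1.1 < y.1.1 → (c x).1.1 ≤ (c y).1.1) : c = 1 := by
  have hlt : ∀ x y : μ.cells, x.1.2 = y.1.2 → x.1.1 < y.1.1 → (c x).1.1 < (c y).1.1 := by
    intro x y hxy hlt
    refine lt_of_le_of_ne (h x y hxy hlt) fun heq => ?_
    have : c x = c y := Subtype.ext (Prod.ext heq (by rw [hc, hc, hxy]))
    rw [c.injective this] at hlt
    exact lt_irrefl _ hlt
  have hle : ∀ i, ∀ x : μ.cells, x.1.1 = i → x.1.1 ≤ (c x).1.1 := by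
    intro i
    induction i with
    | zero => intro x hx; omega
    | succ i ih =>
      intro x hx
      let y : μ.cells := ⟨(i, x.1.2), by
        have := lt_colLen_of_cell x
        simpa using mem_iff_lt_colLen.2 (show i < μ.colLen x.1.2 by omega)⟩
      have h1 := ih y rfl
      have h2 := hlt y x rfl (show i < x.1.1 by omega)
      have h3 : y.1.1 = i := rfl
      omega
  have eq := (Finset.sum_eq_sum_iff_of_le (s := Finset.univ) (f := fun x : μ.cells => x.1.1)
    (g := fun x => (c x).1.1) fun x _ => hle _ x rfl).1
    (Equiv.sum_comp c fun x : μ.cells => x.1.1).symm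
  ext1 x
  exact Subtype.ext (Prod.ext (eq x (Finset.mem_univ x)).symm (hc x))

/-- The sum of the entries of a filling, weighted by their row index. -/
def rowWeight (T : μ.cells → ℕ) : ℕ := ∑ x, x.1.1 * T x

/-- The sum of the entries of a filling, weighted by their column index. -/
def colWeight (T : μ.cells → ℕ) : ℕ := ∑ x, x.1.2 * T x

lemma rowWeight_comp_preservesRows (T : μ.cells → ℕ) {r : Equiv.Perm μ.cells}
    (hr : PreservesRows r) : rowWeight (T ∘ r) = rowWeight T := by
  unfold rowWeight
  rw [← Equiv.sum_comp r fun x => x.1.1 * T x]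
  simp [hr _]

lemma colWeight_comp_preservesCols (T : μ.cells → ℕ) {c : Equiv.Perm μ.cells}
    (hc : PreservesCols c) : colWeight (T ∘ c) = colWeight T := by
  unfold colWeight
  rw [← Equiv.sum_comp c fun x => x.1.2 * T x]
  simp [hc _]

/-- Permuting the columns of a column-strict filling nontrivially lowers its row weight. -/
lemma rowWeight_comp_lt {T : μ.cells → ℕ} (hT : ColStrict T) {c : Equiv.Perm μ.cells}
    (hc : PreservesCols c) (hc1 : c ≠ 1) : rowWeight (T ∘ c) < rowWeight T := by
  let M := ∑ x : μ.cells, (x.1.1 + T x) + 1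
  have hM : ∀ x : μ.cells, x.1.1 + T x < M := fun x =>
    Nat.lt_succ_of_le (Finset.single_le_sum (f := fun x : μ.cells => x.1.1 + T x)
      (fun _ _ => Nat.zero_le _) (Finset.mem_univ x))
  let f : μ.cells → ℕ := fun x => x.1.1 + M * x.1.2
  let g : μ.cells → ℕ := fun x => T x + M * x.1.2
  have lex : ∀ a b c d : ℕ, a < M → c < M → a + M * b < c + M * d → b ≤ d := by
    intro a b c d _ hc h
    by_contra! hlt
    have := Nat.mul_le_mul_left M (Nat.succ_le_of_lt hlt)
    rw [Nat.mul_succ] at this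
    omega
  have lex' : ∀ a b c d : ℕ, a < M → b < d → a + M * b ≤ c + M * d := by
    intro a b c d _ h
    have := Nat.mul_le_mul_left M (Nat.succ_le_of_lt h)
    rw [Nat.mul_succ] at this
    omega
  have mono : Monovary f g := by
    intro x y hxy
    have hcol := lex _ _ _ _ (by have := hM x; omega) (by have := hM y; omega) hxy
    rcases hcol.lt_or_eq with hcol | hcol
    · exact lex' _ _ _ _ (by have := hM x; omega) hcol
    · simp only [f, g, hcol] at hxy ⊢
      by_contra! hlt
      have := hT y x hcol.symm (by omega)
      omega
  have expand : ∀ c : Equiv.Perm μ.cells, PreservesCols c → ∑ x, f x * g (c x) =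
      rowWeight (T ∘ c) +
        (M * colWeight T + ∑ x : μ.cells, (x.1.1 + M * x.1.2) * (M * x.1.2)) := by
    intro c hc
    rw [← colWeight_comp_preservesCols T hc, rowWeight, colWeight, Finset.mul_sum,
      ← Finset.sum_add_distrib, ← Finset.sum_add_distrib]
    refine Finset.sum_congr rfl fun x _ => ?_
    simp only [f, g, hc x, Function.comp_apply]
    ring
  have lt : ∑ x, f x * g (c x) < ∑ x, f x * g x := by
    rw [mono.sum_mul_comp_perm_lt_sum_mul_iff]
    intro hmono
    refine hc1 (eq_one_of_preservesCols_of_monotone hc fun x y hxy hlt => ?_)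
    have h1 : T (c x) ≤ T (c y) := by
      by_contra! h
      have := hmono (i := y) (j := x) (by simp only [g, Function.comp_apply, hc _, hxy]; omega)
      simp only [f, hxy] at this
      omega
    by_contra! h
    have := hT (c y) (c x) (by rw [hc, hc, hxy]) h
    omega
  have e1 := expand c hc
  have e2 := expand 1 fun _ => rfl
  simp only [Equiv.Perm.coe_one, id_eq, Function.comp_id] at e2
  omega

lemma le_of_rowWeak_comp {T U : μ.cells → ℕ} (hT : RowWeak T) (hU : RowWeak U)
    {r : Equiv.Perm μ.cells} (hr : PreservesRows r) (h : U ∘ r = T) (x : μ.cells) :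
    T x ≤ U x := by
  by_contra! hlt
  have weak : ∀ T : μ.cells → ℕ, RowWeak T → ∀ a b : μ.cells, a.1.1 = b.1.1 →
      a.1.2 ≤ b.1.2 → T a ≤ T b := fun T hT a b hab hle => by
    rcases hle.lt_or_eq with hlt | heq
    · exact hT a b hab hlt
    · rw [Subtype.ext (Prod.ext hab heq)]
  let A := Finset.univ.filter fun y : μ.cells => y.1.1 = x.1.1 ∧ T y ≤ U x
  let B := Finset.univ.filter fun y : μ.cells => y.1.1 = x.1.1 ∧ U y ≤ U x
  have hAB : A.card = B.card := by
    refine Finset.card_bij (fun y _ => r y) ?_ (by simp) fun y hy => ⟨r⁻¹ y, ?_, by simp⟩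
    · intro y hy
      simp only [A, B, Finset.mem_filter, Finset.mem_univ, true_and, hr y, ← h,
        Function.comp_apply] at hy ⊢
      exact hy
    · simp only [A, B, Finset.mem_filter, Finset.mem_univ, true_and, ← h, Function.comp_apply,
        Equiv.Perm.inv_def, Equiv.apply_symm_apply] at hy ⊢
      exact ⟨(hr.inv y).trans hy.1, hy.2⟩
  have hsub : A ⊆ B.erase x := by
    intro y hy
    simp only [A, B, Finset.mem_filter, Finset.mem_univ, true_and, Finset.mem_erase] at hy ⊢
    have hyx : y.1.2 < x.1.2 := by
      by_contra! hle
      have := weak T hT x y hy.1.symm hle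
      omega
    exact ⟨fun e => by subst e; omega, hy.1, weak U hU y x hy.1 hyx.le⟩
  have hx : x ∈ B := by simp [B]
  have := Finset.card_le_card hsub
  rw [Finset.card_erase_of_mem hx] at this
  have := Finset.card_pos.2 ⟨x, hx⟩
  omega

lemma eq_of_rowWeak_comp {T U : μ.cells → ℕ} (hT : RowWeak T) (hU : RowWeak U)
    {r : Equiv.Perm μ.cells} (hr : PreservesRows r) (h : U ∘ r = T) : U = T :=
  funext fun x => le_antisymm
    (le_of_rowWeak_comp hU hT hr.inv (by rw [← h]; funext y; simp) x)
    (le_of_rowWeak_comp hT hU hr h x)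

/-- A filling with distinct entries in each column can be sorted within the columns. -/
lemma exists_colStrict_comp {T : μ.cells → ℕ}
    (h : ∀ x y : μ.cells, x.1.2 = y.1.2 → T x = T y → x = y) :
    ∃ c : Equiv.Perm μ.cells, PreservesCols c ∧ ColStrict (T ∘ c) := by
  let s : μ.cells → Finset μ.cells := fun x =>
    Finset.univ.filter fun y : μ.cells => y.1.2 = x.1.2 ∧ T y < T x
  have mono : ∀ x y : μ.cells, x.1.2 = y.1.2 → T x < T y → (s x).card < (s y).card := by
    intro x y hxy hlt
    refine Finset.card_lt_card (Finset.ssubset_iff_of_subset ?_ |>.2 ⟨x, ?_, ?_⟩)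
    · intro z
      simp only [s, Finset.mem_filter, Finset.mem_univ, true_and, hxy]
      exact fun hz => ⟨hz.1, hz.2.trans hlt⟩
    · simp [s, hxy, hlt]
    · simp [s]
  have bound : ∀ x, (s x).card < μ.colLen x.1.2 := fun x => by
    rw [← card_filter_col_eq]
    refine Finset.card_lt_card (Finset.ssubset_iff_of_subset ?_ |>.2 ⟨x, by simp, by simp [s]⟩)
    intro z
    simp only [s, Finset.mem_filter, Finset.mem_univ, true_and]
    exact And.left
  let d₀ : μ.cells → μ.cells := fun x => ⟨((s x).card, x.1.2), by
    simpa using mem_iff_lt_colLen.2 (bound x)⟩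
  have inj : Function.Injective d₀ := fun x y hxy => by
    have := congrArg Subtype.val hxy
    simp only [d₀, Prod.mk.injEq] at this
    rcases lt_trichotomy (T x) (T y) with hlt | heq | hlt
    · exact absurd this.1 (mono x y this.2 hlt).ne
    · exact h x y this.2 heq
    · exact absurd this.1 (mono y x this.2.symm hlt).ne'
  let d : Equiv.Perm μ.cells := Equiv.ofBijective d₀ (Finite.injective_iff_bijective.1 inj)
  have hd : PreservesCols d := fun _ => rfl
  refine ⟨d⁻¹, hd.inv, fun x y hxy hlt => ?_⟩
  obtain ⟨x, rfl⟩ := d.surjective x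
  obtain ⟨y, rfl⟩ := d.surjective y
  rw [hd, hd] at hxy
  replace hlt : (s x).card < (s y).card := hlt
  simp only [Function.comp_apply, Equiv.Perm.inv_def, Equiv.symm_apply_apply]
  by_contra! hle
  rcases hle.lt_or_eq with h1 | h1
  · exact absurd (mono y x hxy.symm h1) (by omega)
  · rw [h y x hxy.symm h1] at hlt
    exact lt_irrefl _ hlt

section Polytabloid

variable {V : Type*} [AddCommGroup V] [Module ℂ V]
  {ρ : Representation ℂ (Equiv.Perm μ.cells) V} {e : V} {φ : V →ₗ[ℂ] ℂ}

/-- A matrix coefficient between a column-alternating vector and a row-invariant functional is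
supported on products of row-preserving and column-preserving permutations. -/
lemma exists_eq_mul_of_coeff_ne_zero
    (he : ∀ c, PreservesCols c → ρ c e = ((Equiv.Perm.sign c : ℤ) : ℂ) • e)
    (hφ : ∀ r, PreservesRows r → ∀ x, φ (ρ r x) = φ x)
    {g : Equiv.Perm μ.cells} (hg : φ (ρ g e) ≠ 0) :
    ∃ r c : Equiv.Perm μ.cells, PreservesRows r ∧ PreservesCols c ∧ g = r * c := by
  refine exists_eq_mul_of_separating fun x y hcol hrow => ?_
  by_contra hxy
  have h1 := he _ (preservesCols_swap hcol)
  rw [Equiv.Perm.sign_swap hxy] at h1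
  have h2 := hφ _ (preservesRows_swap hrow) (ρ g e)
  rw [← Module.End.mul_apply, ← map_mul, Equiv.swap_apply_apply, inv_mul_cancel_right,
    map_mul, Module.End.mul_apply, h1] at h2
  simp only [Units.val_neg, Units.val_one, Int.cast_neg, Int.cast_one, neg_smul, one_smul,
    map_neg] at h2
  exact hg (self_eq_neg.1 h2.symm)

lemma coeff_mul
    (he : ∀ c, PreservesCols c → ρ c e = ((Equiv.Perm.sign c : ℤ) : ℂ) • e)
    (hφ : ∀ r, PreservesRows r → ∀ x, φ (ρ r x) = φ x)
    {r c : Equiv.Perm μ.cells} (hr : PreservesRows r) (hc : PreservesCols c) :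
    φ (ρ (r * c) e) = ((Equiv.Perm.sign c : ℤ) : ℂ) * φ e := by
  rw [map_mul, Module.End.mul_apply, hφ r hr, he c hc, map_smul, smul_eq_mul]

/-- The permutations supported on a set `Y` of cells. -/
def permsOn (Y : Finset μ.cells) : Finset (Equiv.Perm μ.cells) :=
  open Classical in Finset.univ.filter fun σ => ∀ x ∉ Y, σ x = x

lemma mem_permsOn {Y : Finset μ.cells} {σ : Equiv.Perm μ.cells} :
    σ ∈ permsOn Y ↔ ∀ x ∉ Y, σ x = x := by
  simp [permsOn]

lemma apply_mem_of_mem_permsOn {Y : Finset μ.cells} {σ : Equiv.Perm μ.cells}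
    (hσ : σ ∈ permsOn Y) {x : μ.cells} (hx : x ∈ Y) : σ x ∈ Y := by
  by_contra h
  have := mem_permsOn.1 hσ _ h
  exact h (by rwa [σ.injective this])

lemma inv_mem_permsOn {Y : Finset μ.cells} {σ : Equiv.Perm μ.cells}
    (hσ : σ ∈ permsOn Y) : σ⁻¹ ∈ permsOn Y :=
  mem_permsOn.2 fun x hx => by
    rw [Equiv.Perm.inv_eq_iff_eq, mem_permsOn.1 hσ x hx]

lemma swap_mul_mem_permsOn {Y : Finset μ.cells} {σ : Equiv.Perm μ.cells} {x y : μ.cells}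
    (hx : x ∈ Y) (hy : y ∈ Y) (hσ : σ ∈ permsOn Y) : Equiv.swap x y * σ ∈ permsOn Y :=
  mem_permsOn.2 fun z hz => by
    rw [Equiv.Perm.mul_apply, mem_permsOn.1 hσ z hz, Equiv.swap_apply_of_ne_of_ne]
    · rintro rfl; exact hz hx
    · rintro rfl; exact hz hy

/-- The Garnir relation, tested against a row-invariant functional. -/
lemma coeff_garnir_eq_zero
    (he : ∀ c, PreservesCols c → ρ c e = ((Equiv.Perm.sign c : ℤ) : ℂ) • e)
    (hφ : ∀ r, PreservesRows r → ∀ x, φ (ρ r x) = φ x)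
    {Y : Finset μ.cells} {j : ℕ} (hcol : ∀ x ∈ Y, j ≤ x.1.2) (hcard : μ.colLen j < Y.card)
    (u : Equiv.Perm μ.cells) :
    ∑ σ ∈ permsOn Y, ((Equiv.Perm.sign σ : ℤ) : ℂ) * φ (ρ (u * σ) e) = 0 := by
  by_contra hne
  obtain ⟨σ, hσ, hσne⟩ := Finset.exists_ne_zero_of_sum_ne_zero hne
  obtain ⟨r, c, hr, hc, hrc⟩ := exists_eq_mul_of_coeff_ne_zero he hφ (right_ne_zero_of_mul hσne)
  have hmaps : ∀ z ∈ Y, (c (σ⁻¹ z)).1.1 ∈ Finset.range (μ.colLen j) := fun z hz => by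
    have h1 := lt_colLen_of_cell (c (σ⁻¹ z))
    rw [hc] at h1
    rw [Finset.mem_range]
    exact h1.trans_le
      (μ.colLen_anti _ _ (hcol _ (apply_mem_of_mem_permsOn (inv_mem_permsOn hσ) hz)))
  obtain ⟨x, hx, y, hy, hxy, hrow⟩ :=
    Finset.exists_ne_map_eq_of_card_lt_of_maps_to (by simpa using hcard) hmaps
  have hu : u = r * c * σ⁻¹ := by rw [← hrc, mul_inv_cancel_right]
  have hurow : (u x).1.1 = (u y).1.1 := by
    simp only [hu, Equiv.Perm.mul_apply]
    rw [hr, hr, hrow]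
  refine hne (self_eq_neg.1 ?_)
  rw [← Finset.sum_neg_distrib]
  refine Finset.sum_bij' (fun σ _ => Equiv.swap x y * σ) (fun σ _ => Equiv.swap x y * σ)
    (fun σ hσ => swap_mul_mem_permsOn hx hy hσ) (fun σ hσ => swap_mul_mem_permsOn hx hy hσ)
    (fun σ _ => by simp) (fun σ _ => by simp) fun σ _ => ?_
  have h1 : φ (ρ (u * (Equiv.swap x y * σ)) e) = φ (ρ (u * σ) e) := by
    rw [← hφ _ (preservesRows_swap hurow) (ρ (u * σ) e), ← Module.End.mul_apply, ← map_mul,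
      Equiv.swap_apply_apply]
    congr 3
    group
  rw [h1, Equiv.Perm.sign_mul, Equiv.Perm.sign_swap hxy]
  simp

/-- In an irreducible representation a nonzero functional separates points. -/
lemma eq_zero_of_coeff_eq_zero {G V : Type*} [Group G] [AddCommGroup V] [Module ℂ V]
    {ρ : Representation ℂ G V} (hirr : ρ.IsIrred) {φ : V →ₗ[ℂ] ℂ} (hφ : φ ≠ 0) {x : V}
    (hx : ∀ g, φ (ρ g x) = 0) : x = 0 := by
  let U : Submodule ℂ V := ⨅ g, LinearMap.ker (φ ∘ₗ ρ g)
  have hU : ∀ v, v ∈ U ↔ ∀ g, φ (ρ g v) = 0 := fun v => by simp [U]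
  rcases hirr U fun g v hv => (hU _).2 fun h => by
    rw [← Module.End.mul_apply, ← map_mul]; exact (hU v).1 hv _ with h | h
  · have := (hU x).2 hx
    rwa [h, Submodule.mem_bot] at this
  · refine absurd (LinearMap.ext fun v => ?_) hφ
    have := (hU v).1 (h ▸ Submodule.mem_top) 1
    simpa using this

/-- In an irreducible representation every nonzero vector is cyclic. -/
lemma span_orbit_eq_top {G V : Type*} [Group G] [AddCommGroup V] [Module ℂ V]
    {ρ : Representation ℂ G V} (hirr : ρ.IsIrred) {e : V} (he : e ≠ 0) :
    Submodule.span ℂ (Set.range fun g => ρ g e) = ⊤ := by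
  refine (hirr _ fun g v hv => ?_).resolve_left fun h => he ?_
  · have := Submodule.mem_map_of_mem (f := ρ g) hv
    rw [Submodule.map_span, ← Set.range_comp] at this
    refine Submodule.span_mono ?_ this
    rintro _ ⟨h, rfl⟩
    exact ⟨g * h, by simp⟩
  · rw [Submodule.span_eq_bot] at h
    simpa using h _ ⟨1, rfl⟩

/-- The Garnir relation. -/
lemma garnir_eq_zero (hirr : ρ.IsIrred)
    (he : ∀ c, PreservesCols c → ρ c e = ((Equiv.Perm.sign c : ℤ) : ℂ) • e)
    (hφ : ∀ r, PreservesRows r → ∀ x, φ (ρ r x) = φ x) (hφe : φ e ≠ 0)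
    {Y : Finset μ.cells} {j : ℕ} (hcol : ∀ x ∈ Y, j ≤ x.1.2) (hcard : μ.colLen j < Y.card) :
    ∑ σ ∈ permsOn Y, ((Equiv.Perm.sign σ : ℤ) : ℂ) • ρ σ e = 0 := by
  refine eq_zero_of_coeff_eq_zero hirr (φ := φ) (fun h => hφe (by simp [h])) fun u => ?_
  rw [← coeff_garnir_eq_zero he hφ hcol hcard u]
  simp

/-- The vector attached to a filling `T` of the cells: the sum of the translates `ρ g e` over the
permutations `g` turning the reference filling `f` into `T`. -/
noncomputable def fillingVector (ρ : Representation ℂ (Equiv.Perm μ.cells) V) (e : V)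
    (f T : μ.cells → ℕ) : V :=
  ∑ g with f ∘ (g : Equiv.Perm μ.cells) = T, ρ g e

variable (f : μ.cells → ℕ)

lemma fillingVector_comp (σ : Equiv.Perm μ.cells) (T : μ.cells → ℕ) :
    fillingVector ρ e f (T ∘ σ) = ∑ g with f ∘ (g : Equiv.Perm μ.cells) = T, ρ (g * σ) e := by
  refine Finset.sum_bij' (fun g _ => g * σ⁻¹) (fun g _ => g * σ) ?_ ?_ (by simp) (by simp)
    (by simp)
  · intro g hg
    simp only [Finset.mem_filter, Finset.mem_univ, true_and, Equiv.Perm.coe_mul] at hg ⊢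
    rw [← Function.comp_assoc, hg, Function.comp_assoc, ← Equiv.Perm.coe_mul, mul_inv_cancel,
      Equiv.Perm.coe_one, Function.comp_id]
  · intro g hg
    simp only [Finset.mem_filter, Finset.mem_univ, true_and, Equiv.Perm.coe_mul] at hg ⊢
    rw [← Function.comp_assoc, hg]

lemma fillingVector_comp_preservesCols
    (he : ∀ c, PreservesCols c → ρ c e = ((Equiv.Perm.sign c : ℤ) : ℂ) • e)
    {c : Equiv.Perm μ.cells} (hc : PreservesCols c) (T : μ.cells → ℕ) :
    fillingVector ρ e f (T ∘ c) = ((Equiv.Perm.sign c : ℤ) : ℂ) • fillingVector ρ e f T := by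
  rw [fillingVector_comp, fillingVector, Finset.smul_sum]
  simp [he c hc]

lemma sum_permsOn_fillingVector (Y : Finset μ.cells) (T : μ.cells → ℕ)
    (h : ∑ σ ∈ permsOn Y, ((Equiv.Perm.sign σ : ℤ) : ℂ) • ρ σ e = 0) :
    ∑ σ ∈ permsOn Y, ((Equiv.Perm.sign σ : ℤ) : ℂ) • fillingVector ρ e f (T ∘ σ) = 0 := by
  simp_rw [fillingVector_comp, Finset.smul_sum]
  rw [Finset.sum_comm]
  refine Finset.sum_eq_zero fun g _ => ?_
  have := congrArg (ρ g) h
  rw [map_sum, map_zero] at this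
  rw [← this]
  simp

lemma fillingVector_eq_zero
    (he : ∀ c, PreservesCols c → ρ c e = ((Equiv.Perm.sign c : ℤ) : ℂ) • e)
    {T : μ.cells → ℕ} {x y : μ.cells} (hcol : x.1.2 = y.1.2) (hT : T x = T y) (hxy : x ≠ y) :
    fillingVector ρ e f T = 0 := by
  have h := fillingVector_comp_preservesCols f he (preservesCols_swap hcol) T
  have hcomp : T ∘ Equiv.swap x y = T := by
    funext z
    rw [Function.comp_apply, Equiv.swap_apply_def]
    split_ifs with h1 h2
    · rw [h1, hT]
    · rw [h2, hT]
    · rfl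
  rw [hcomp, Equiv.Perm.sign_swap hxy] at h
  simp only [Units.val_neg, Units.val_one, Int.cast_neg, Int.cast_one, neg_smul,
    one_smul] at h
  have h2 : (2 : ℂ) • fillingVector ρ e f T = 0 := by
    rw [two_smul]; nth_rewrite 1 [h]; exact neg_add_cancel _
  exact (smul_eq_zero.1 h2).resolve_left two_ne_zero

/-- Permuting the entries of a Garnir set out of their columns raises the column weight. -/
lemma colWeight_lt_of_mem_permsOn {T : μ.cells → ℕ} {Y : Finset μ.cells} {j j' a : ℕ}
    (hjj' : j < j') (hY : ∀ x ∈ Y, x.1.2 = j ∧ a < T x ∨ x.1.2 = j' ∧ T x ≤ a)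
    {σ : Equiv.Perm μ.cells} (hσ : σ ∈ permsOn Y) (hcols : ¬ PreservesCols σ) :
    colWeight T < colWeight (T ∘ σ) := by
  have anti : AntivaryOn (fun x : μ.cells => x.1.2) T Y := by
    intro x hx y hy hlt
    rcases hY x hx with h | h <;> rcases hY y hy with h' | h' <;> simp only [h.1, h'.1] <;> omega
  have supp : {x | σ x ≠ x} ⊆ (Y : Set μ.cells) := fun x hx => by
    by_contra h
    exact hx (mem_permsOn.1 hσ x h)
  have lt : ∑ x ∈ Y, x.1.2 * T x < ∑ x ∈ Y, x.1.2 * T (σ x) := by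
    rw [anti.sum_mul_lt_sum_mul_comp_perm_iff supp]
    intro anti'
    let A := Y.filter fun x => x.1.2 = j
    let B := Y.filter fun x => x.1.2 = j'
    have maps : (∀ x ∈ A, σ x ∈ A) ∨ ∀ x ∈ B, σ x ∈ B := by
      by_contra! hcon
      obtain ⟨⟨x, hx, hx'⟩, y, hy, hy'⟩ := hcon
      simp only [A, B, Finset.mem_filter] at hx hx' hy hy'
      have hσx := apply_mem_of_mem_permsOn hσ hx.1
      have hσy := apply_mem_of_mem_permsOn hσ hy.1
      have h1 : T (σ x) ≤ a := by
        rcases hY _ hσx with h | h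
        · exact absurd ⟨hσx, h.1⟩ hx'
        · exact h.2
      have h2 : a < T (σ y) := by
        rcases hY _ hσy with h | h
        · exact h.2
        · exact absurd ⟨hσy, h.1⟩ hy'
      have := anti' hx.1 hy.1 (show T (σ x) < T (σ y) by omega)
      simp only [hx.2, hy.2] at this
      omega
    have maps_iff : ∀ C : Finset μ.cells, (∀ x ∈ C, σ x ∈ C) → ∀ x, σ x ∈ C → x ∈ C := by
      intro C hC x hx
      have him : C.map σ.toEmbedding = C := Finset.eq_of_subset_of_card_le
        (fun z hz => by
          obtain ⟨w, hw, rfl⟩ := Finset.mem_map.1 hz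
          exact hC w hw) (by simp)
      rw [← him] at hx
      simpa using hx
    refine hcols fun x => ?_
    by_cases hx : x ∈ Y
    · have hσx := apply_mem_of_mem_permsOn hσ hx
      have key : (x.1.2 = j ↔ (σ x).1.2 = j) ∨ (x.1.2 = j' ↔ (σ x).1.2 = j') := by
        refine maps.imp (fun m => ?_) fun m => ?_
        · have h1 := m x
          have h2 := maps_iff A m x
          simp only [A, Finset.mem_filter, hx, hσx, true_and] at h1 h2
          exact ⟨h1, h2⟩
        · have h1 := m x
          have h2 := maps_iff B m x
          simp only [B, Finset.mem_filter, hx, hσx, true_and] at h1 h2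
          exact ⟨h1, h2⟩
      rcases hY _ hx with h | h <;> rcases hY _ hσx with h' | h' <;> omega
    · rw [mem_permsOn.1 hσ x hx]
  have rest : ∑ x ∈ Yᶜ, x.1.2 * T x = ∑ x ∈ Yᶜ, x.1.2 * T (σ x) :=
    Finset.sum_congr rfl fun x hx => by
      rw [mem_permsOn.1 hσ x (Finset.mem_compl.1 hx)]
  unfold colWeight
  rw [← Finset.sum_add_sum_compl Y, ← Finset.sum_add_sum_compl Y fun x => x.1.2 * (T ∘ σ) x]
  simp only [Function.comp_apply]
  omega

/-- The straightening algorithm: the vectors of semistandard fillings span those of all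
fillings. -/
lemma fillingVector_mem_span (hirr : ρ.IsIrred)
    (he : ∀ c, PreservesCols c → ρ c e = ((Equiv.Perm.sign c : ℤ) : ℂ) • e)
    (hφ : ∀ r, PreservesRows r → ∀ x, φ (ρ r x) = φ x) (hφe : φ e ≠ 0) (T : μ.cells → ℕ) :
    fillingVector ρ e f T ∈ Submodule.span ℂ
      (fillingVector ρ e f '' {S | (∃ g : Equiv.Perm μ.cells, f ∘ g = S) ∧
        ColStrict S ∧ RowWeak S}) := by
  set W := Submodule.span ℂ
      (fillingVector ρ e f '' {S | (∃ g : Equiv.Perm μ.cells, f ∘ g = S) ∧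
        ColStrict S ∧ RowWeak S})
  have bound : ∀ T : μ.cells → ℕ, colWeight T ≤ (∑ x : μ.cells, x.1.2) * ∑ x, T x := fun T => by
    rw [colWeight, Finset.sum_mul]
    exact Finset.sum_le_sum fun x _ => Nat.mul_le_mul_left _
      (Finset.single_le_sum (fun _ _ => Nat.zero_le _) (Finset.mem_univ x))
  induction hn : (∑ x : μ.cells, x.1.2) * (∑ x, T x) - colWeight T using
    Nat.strong_induction_on generalizing T with
  | _ n ih =>
    subst hn
    by_cases hdist : ∀ x y : μ.cells, x.1.2 = y.1.2 → T x = T y → x = y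
    swap
    · push Not at hdist
      obtain ⟨x, y, hcol, hT, hxy⟩ := hdist
      rw [fillingVector_eq_zero f he hcol hT hxy]
      exact W.zero_mem
    obtain ⟨c, hc, hstrict⟩ := exists_colStrict_comp hdist
    suffices hmem : fillingVector ρ e f (T ∘ c) ∈ W by
      have h := W.smul_mem ((Equiv.Perm.sign c : ℤ) : ℂ) hmem
      rw [fillingVector_comp_preservesCols f he hc, smul_smul] at h
      rcases Int.units_eq_one_or (Equiv.Perm.sign c) with hs | hs <;> simpa [hs] using h
    have hw := colWeight_comp_preservesCols T hc
    have hs : ∑ x, (T ∘ c) x = ∑ x, T x := Equiv.sum_comp c T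
    rw [← hw, ← hs] at ih
    generalize T ∘ c = T at hstrict ih ⊢
    by_cases hweak : RowWeak T
    · by_cases hg : ∃ g : Equiv.Perm μ.cells, f ∘ g = T
      · exact Submodule.subset_span ⟨T, ⟨hg, hstrict, hweak⟩, rfl⟩
      · rw [fillingVector, Finset.filter_false_of_mem fun g _ h => hg ⟨g, h⟩]
        exact W.zero_mem
    · simp only [RowWeak] at hweak
      push Not at hweak
      obtain ⟨x, y, hrow, hcol, hlt⟩ := hweak
      let A := Finset.univ.filter fun z : μ.cells => z.1.2 = x.1.2 ∧ x.1.1 ≤ z.1.1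
      let B := Finset.univ.filter fun z : μ.cells => z.1.2 = y.1.2 ∧ z.1.1 < x.1.1 + 1
      have hAB : Disjoint A B := Finset.disjoint_left.2 fun z hA hB => by
        simp only [A, B, Finset.mem_filter, Finset.mem_univ, true_and] at hA hB
        omega
      have hB : B.card = x.1.1 + 1 := by
        rw [card_filter_col_eq_row_lt]
        have := lt_colLen_of_cell y
        omega
      have hA : A.card + x.1.1 = μ.colLen x.1.2 := by
        have h1 := card_filter_col_eq_row_lt (μ := μ) x.1.2 x.1.1
        have h2 := lt_colLen_of_cell x
        rw [min_eq_left h2.le] at h1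
        refine Eq.trans (congrArg _ h1.symm) ?_
        rw [← card_filter_col_eq, ← Finset.card_union_of_disjoint]
        · congr 1
          ext z
          simp only [A, Finset.mem_union, Finset.mem_filter, Finset.mem_univ, true_and]
          omega
        · exact Finset.disjoint_left.2 fun z hA hB => by
            simp only [A, Finset.mem_filter, Finset.mem_univ, true_and] at hA hB
            omega
      let Y := A ∪ B
      have hcard : μ.colLen x.1.2 < Y.card := by
        rw [Finset.card_union_of_disjoint hAB]
        omega
      have weak : ∀ z w : μ.cells, z.1.2 = w.1.2 → z.1.1 ≤ w.1.1 → T z ≤ T w :=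
        fun z w h1 h2 => by
          rcases h2.lt_or_eq with h2 | h2
          · exact (hstrict z w h1 h2).le
          · rw [Subtype.ext (Prod.ext h2 h1)]
      have hY : ∀ z ∈ Y, z.1.2 = x.1.2 ∧ T y < T z ∨ z.1.2 = y.1.2 ∧ T z ≤ T y := by
        intro z hz
        simp only [Y, A, B, Finset.mem_union, Finset.mem_filter, Finset.mem_univ,
          true_and] at hz
        rcases hz with hz | hz
        · exact Or.inl ⟨hz.1, hlt.trans_le (weak x z hz.1.symm hz.2)⟩
        · exact Or.inr ⟨hz.1, weak z y hz.1 (by omega)⟩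
      have rel := sum_permsOn_fillingVector f Y T (garnir_eq_zero hirr he hφ hφe
        (fun z hz => by rcases hY z hz with h | h <;> omega) hcard)
      classical
      rw [← Finset.sum_filter_add_sum_filter_not _ PreservesCols] at rel
      have h1 : ∑ σ ∈ (permsOn Y).filter PreservesCols,
          ((Equiv.Perm.sign σ : ℤ) : ℂ) • fillingVector ρ e f (T ∘ σ) =
          (((permsOn Y).filter PreservesCols).card : ℂ) • fillingVector ρ e f T := by
        rw [Nat.cast_smul_eq_nsmul, ← Finset.sum_const]
        refine Finset.sum_congr rfl fun σ hσ => ?_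
        rw [fillingVector_comp_preservesCols f he (Finset.mem_filter.1 hσ).2, smul_smul]
        rcases Int.units_eq_one_or (Equiv.Perm.sign σ) with hs | hs <;> simp [hs]
      have h2 : ∑ σ ∈ (permsOn Y).filter fun σ => ¬ PreservesCols σ,
          ((Equiv.Perm.sign σ : ℤ) : ℂ) • fillingVector ρ e f (T ∘ σ) ∈ W := by
        refine W.sum_mem fun σ hσ => W.smul_mem _ ?_
        obtain ⟨hσ, hnc⟩ := Finset.mem_filter.1 hσ
        have hlt' := colWeight_lt_of_mem_permsOn hcol hY hσ hnc
        have hs' : ∑ x, (T ∘ σ) x = ∑ x, T x := Equiv.sum_comp σ T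
        refine ih _ ?_ _ rfl
        have := bound (T ∘ σ)
        rw [hs'] at this ⊢
        omega
      rw [h1, add_eq_zero_iff_eq_neg] at rel
      have hne : (((permsOn Y).filter PreservesCols).card : ℂ) ≠ 0 := by
        rw [Nat.cast_ne_zero, ← Nat.pos_iff_ne_zero, Finset.card_pos]
        exact ⟨1, Finset.mem_filter.2 ⟨mem_permsOn.2 fun _ _ => rfl, fun _ => rfl⟩⟩
      rw [← W.smul_mem_iff hne, rel]
      exact W.neg_mem h2

/-- Testing the vector of a filling `T` against the functional attached to a filling `f ∘ u`:
the result vanishes unless `T = f ∘ u` or `T` has larger row weight, and it does not vanish when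
`T = f ∘ u`. -/
lemma coeff_fillingVector_self
    (he : ∀ c, PreservesCols c → ρ c e = ((Equiv.Perm.sign c : ℤ) : ℂ) • e)
    (hφ : ∀ r, PreservesRows r → ∀ x, φ (ρ r x) = φ x) (hφe : φ e ≠ 0)
    {u : Equiv.Perm μ.cells} (hT : ColStrict (f ∘ u)) :
    φ (ρ u⁻¹ (fillingVector ρ e f (f ∘ u))) ≠ 0 := by
  classical
  have key : φ (ρ u⁻¹ (fillingVector ρ e f (f ∘ u))) =
      ∑ g with f ∘ (g : Equiv.Perm μ.cells) = f ∘ u, if φ (ρ (u⁻¹ * g) e) = 0 then 0 else φ e := by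
    rw [fillingVector, map_sum, map_sum]
    refine Finset.sum_congr rfl fun g hg => ?_
    rw [← Module.End.mul_apply, ← map_mul]
    split_ifs with h0
    · exact h0
    obtain ⟨r, c, hr, hc, hrc⟩ := exists_eq_mul_of_coeff_ne_zero he hφ h0
    have hfg : f ∘ g = f ∘ u := (Finset.mem_filter.1 hg).2
    have hg' : g = u * (r * c) := by rw [← hrc, mul_inv_cancel_left]
    have hc1 : c = 1 := by
      by_contra hc1
      have h1 := rowWeight_comp_lt hT hc.inv (inv_ne_one.2 hc1)
      have h2 := rowWeight_comp_preservesRows (f ∘ u) hr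
      have h3 : (f ∘ u) ∘ ⇑c⁻¹ = (f ∘ u) ∘ r := by
        nth_rewrite 1 [← hfg]
        rw [hg']
        funext z
        simp
      rw [h3, h2] at h1
      exact lt_irrefl _ h1
    rw [hrc, coeff_mul he hφ hr hc, hc1]
    simp
  rw [key, Finset.sum_ite, Finset.sum_const_zero, zero_add, Finset.sum_const, nsmul_eq_mul]
  refine mul_ne_zero (Nat.cast_ne_zero.2 (Finset.card_pos.2 ⟨u, ?_⟩).ne') hφe
  simp [hφe]

lemma coeff_fillingVector_eq_zero
    (he : ∀ c, PreservesCols c → ρ c e = ((Equiv.Perm.sign c : ℤ) : ℂ) • e)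
    (hφ : ∀ r, PreservesRows r → ∀ x, φ (ρ r x) = φ x)
    {T : μ.cells → ℕ} {u : Equiv.Perm μ.cells} (hT : ColStrict T) (hTw : RowWeak T)
    (hu : RowWeak (f ∘ u)) (hne : T ≠ f ∘ u) (hle : rowWeight T ≤ rowWeight (f ∘ u)) :
    φ (ρ u⁻¹ (fillingVector ρ e f T)) = 0 := by
  rw [fillingVector, map_sum, map_sum]
  refine Finset.sum_eq_zero fun g hg => ?_
  rw [← Module.End.mul_apply, ← map_mul]
  by_contra h0
  obtain ⟨r, c, hr, hc, hrc⟩ := exists_eq_mul_of_coeff_ne_zero he hφ h0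
  have hfg : f ∘ g = T := (Finset.mem_filter.1 hg).2
  have hg' : g = u * (r * c) := by rw [← hrc, mul_inv_cancel_left]
  have h3 : T ∘ ⇑c⁻¹ = (f ∘ u) ∘ r := by
    rw [← hfg, hg']
    funext z
    simp
  by_cases hc1 : c = 1
  · rw [hc1, inv_one, Equiv.Perm.coe_one, Function.comp_id] at h3
    exact hne (eq_of_rowWeak_comp hTw hu hr h3.symm).symm
  · have h1 := rowWeight_comp_lt hT hc.inv (inv_ne_one.2 hc1)
    rw [h3, rowWeight_comp_preservesRows _ hr] at h1
    omega

lemma linearIndepOn_fillingVector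
    (he : ∀ c, PreservesCols c → ρ c e = ((Equiv.Perm.sign c : ℤ) : ℂ) • e)
    (hφ : ∀ r, PreservesRows r → ∀ x, φ (ρ r x) = φ x) (hφe : φ e ≠ 0) :
    LinearIndepOn ℂ (fillingVector ρ e f)
      {S | (∃ g : Equiv.Perm μ.cells, f ∘ g = S) ∧ ColStrict S ∧ RowWeak S} := by
  rw [LinearIndepOn, linearIndependent_iff']
  intro s a hsum
  by_contra! hcon
  obtain ⟨i, hi, hai⟩ := hcon
  obtain ⟨U, hU, hmax⟩ := Finset.exists_max_image (s.filter fun S => a S ≠ 0)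
    (fun S => rowWeight S.1) ⟨i, Finset.mem_filter.2 ⟨hi, hai⟩⟩
  obtain ⟨hUs, haU⟩ := Finset.mem_filter.1 hU
  obtain ⟨⟨u, hu⟩, hUc, hUr⟩ := U.2
  have h := congrArg (fun v => φ (ρ u⁻¹ v)) hsum
  simp only [map_sum, map_smul, map_zero] at h
  rw [Finset.sum_eq_single U] at h
  · rw [← hu] at hUc
    have := coeff_fillingVector_self f he hφ hφe hUc
    rw [hu] at this
    exact (smul_ne_zero haU this) h
  · intro S hS hSU
    by_cases haS : a S = 0
    · rw [haS, zero_smul]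
    · obtain ⟨-, hSc, hSr⟩ := S.2
      rw [coeff_fillingVector_eq_zero f he hφ hSc hSr (hu ▸ hUr)
        (fun h => hSU (Subtype.ext (h.trans hu)))
        (hu ▸ hmax S (Finset.mem_filter.2 ⟨hS, haS⟩)), smul_zero]
  · exact fun h => absurd hUs h

end Polytabloid

section Invariants

variable {V : Type*} [AddCommGroup V] [Module ℂ V]
  {ρ : Representation ℂ (Equiv.Perm μ.cells) V}

lemma natCard_semistandard_eq_kostkaNumber (f : μ.cells → ℕ) (c : ℕ → ℕ)
    (hf : ∀ n, (Finset.univ.filter fun x => f x = n).card = c n) :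
    Nat.card {S | (∃ g : Equiv.Perm μ.cells, f ∘ g = S) ∧ ColStrict S ∧ RowWeak S} =
      kostkaNumber μ c := by
  have count : ∀ (T : ℕ → ℕ → ℕ) (n : ℕ), (μ.cells.filter fun x => T x.1 x.2 = n).card =
      (Finset.univ.filter fun x : μ.cells => T x.1.1 x.1.2 = n).card := fun T n => by
    rw [← Finset.card_map (Function.Embedding.subtype _)]
    congr 1
    ext ⟨a, b⟩
    simp [and_comm]
  have hmem : ∀ T : {T : SemistandardYoungTableau μ //
      ∀ n : ℕ, (μ.cells.filter fun x => T x.1 x.2 = n).card = c n},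
      (fun x : μ.cells => T.1 x.1.1 x.1.2) ∈
        {S | (∃ g : Equiv.Perm μ.cells, f ∘ g = S) ∧ ColStrict S ∧ RowWeak S} := by
    refine fun T => ⟨?_, ?_, ?_⟩
    · obtain ⟨g, hg⟩ := exists_equiv_comp_eq_of_card_fiber_eq
        (fun x : μ.cells => T.1 x.1.1 x.1.2) f fun n => by rw [hf, ← count, T.2]
      exact ⟨g, hg⟩
    · intro x y hcol hrow
      have := T.1.col_strict (j := y.1.2) hrow (by simp)
      dsimp only
      rwa [hcol]
    · intro x y hrow hcol
      have := T.1.row_weak (i := y.1.1) hcol (by simp)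
      dsimp only
      rwa [hrow]
  refine (Nat.card_congr (Equiv.ofBijective (fun T => ⟨_, hmem T⟩) ⟨?_, ?_⟩)).symm
  · intro T U h
    refine Subtype.ext (SemistandardYoungTableau.ext fun i j => ?_)
    by_cases hij : (i, j) ∈ μ
    · exact congrFun (congrArg Subtype.val h) ⟨(i, j), by simpa using hij⟩
    · rw [T.1.zeros hij, U.1.zeros hij]
  · rintro ⟨S, ⟨g, hg⟩, hcol, hrow⟩
    let E : ℕ → ℕ → ℕ := fun i j => if h : (i, j) ∈ μ.cells then S ⟨(i, j), h⟩ else 0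
    have hE : ∀ x : μ.cells, E x.1.1 x.1.2 = S x := fun x => by simp [E]
    refine ⟨⟨⟨E, fun {i j1 j2} hj hcell => ?_, fun {i1 i2 j} hi hcell => ?_,
      fun {i j} h => ?_⟩, fun n => ?_⟩, Subtype.ext (funext hE)⟩
    · have hcell' := μ.up_left_mem le_rfl hj.le hcell
      rw [← mem_cells] at hcell hcell'
      rw [hE ⟨_, hcell⟩, hE ⟨_, hcell'⟩]
      exact hrow _ _ rfl hj
    · have hcell' := μ.up_left_mem hi.le le_rfl hcell
      rw [← mem_cells] at hcell hcell'
      rw [hE ⟨_, hcell⟩, hE ⟨_, hcell'⟩]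
      exact hcol _ _ rfl hi
    · simp [E, h]
    · refine (count E n).trans ?_
      simp only [hE]
      rw [← hf n]
      refine Finset.card_bij (fun x _ => g x) ?_ (by simp) fun x hx => ⟨g.symm x, ?_, by simp⟩
      · simp [← hg]
      · simpa [← hg] using hx

/-- Young's rule: the dimension of the space of vectors invariant under the permutations fixing
a labelling `f` of the cells is a Kostka number. -/
lemma finrank_invariants_cells {e : V} {φ : V →ₗ[ℂ] ℂ} (hirr : ρ.IsIrred)
    (he : ∀ c, PreservesCols c → ρ c e = ((Equiv.Perm.sign c : ℤ) : ℂ) • e)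
    (hφ : ∀ r, PreservesRows r → ∀ x, φ (ρ r x) = φ x) (hφe : φ e ≠ 0)
    (f : μ.cells → ℕ) (c : ℕ → ℕ)
    (hf : ∀ n, (Finset.univ.filter fun x => f x = n).card = c n) (W : Submodule ℂ V)
    (hW : ∀ x, x ∈ W ↔ ∀ σ : Equiv.Perm μ.cells, f ∘ σ = f → ρ σ x = x) :
    finrank ℂ W = kostkaNumber μ c := by
  have hspan : W = Submodule.span ℂ (Set.range fun
      S : {S | (∃ g : Equiv.Perm μ.cells, f ∘ g = S) ∧ ColStrict S ∧ RowWeak S} =>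
        fillingVector ρ e f S) := by
    rw [← Set.image_eq_range]
    refine le_antisymm (fun x hx => ?_) (Submodule.span_le.2 ?_)
    · let P : V →ₗ[ℂ] V := ∑ σ with f ∘ (σ : Equiv.Perm μ.cells) = f, ρ σ
      have hP : ∀ y, P y = ∑ σ with f ∘ (σ : Equiv.Perm μ.cells) = f, ρ σ y := fun y => by
        simp [P]
      have hPx : P x =
          ((Finset.univ.filter fun σ : Equiv.Perm μ.cells => f ∘ σ = f).card : ℂ) • x := by
        rw [hP, Nat.cast_smul_eq_nsmul, ← Finset.sum_const]
        exact Finset.sum_congr rfl fun σ hσ => (hW x).1 hx σ (Finset.mem_filter.1 hσ).2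
      have hPg : ∀ g, P (ρ g e) = fillingVector ρ e f (f ∘ g) := fun g => by
        rw [hP, fillingVector_comp]
        simp
      have hx' : x ∈ Submodule.span ℂ (Set.range fun g => ρ g e) := by
        rw [span_orbit_eq_top hirr fun h => hφe (by simp [h])]
        exact Submodule.mem_top
      have := Submodule.mem_map_of_mem (f := P) hx'
      rw [Submodule.map_span, ← Set.range_comp, hPx, Submodule.smul_mem_iff] at this
      · refine Submodule.span_le.2 ?_ this
        rintro _ ⟨g, rfl⟩
        rw [Function.comp_apply, hPg]
        exact fillingVector_mem_span f hirr he hφ hφe _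
      · rw [Nat.cast_ne_zero, ← Nat.pos_iff_ne_zero, Finset.card_pos]
        exact ⟨1, by simp⟩
    · rintro _ ⟨S, -, rfl⟩
      refine (hW _).2 fun σ hσ => ?_
      have hσ' : f ∘ ⇑σ⁻¹ = f := by
        nth_rewrite 1 [← hσ]
        funext z
        simp
      rw [fillingVector, map_sum]
      refine Finset.sum_bij' (fun g _ => σ * g) (fun g _ => σ⁻¹ * g) ?_ ?_ (by simp) (by simp)
        (by simp)
      · intro g hg
        simp only [Finset.mem_filter, Finset.mem_univ, true_and, Equiv.Perm.coe_mul] at hg ⊢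
        rw [← Function.comp_assoc, hσ, hg]
      · intro g hg
        simp only [Finset.mem_filter, Finset.mem_univ, true_and, Equiv.Perm.coe_mul] at hg ⊢
        rw [← Function.comp_assoc, hσ', hg]
  rw [hspan, finrank_eq_nat_card_basis
    (Basis.span (linearIndepOn_fillingVector f he hφ hφe)),
    natCard_semistandard_eq_kostkaNumber f c hf]

/-- Given a row-invariant and a column-alternating vector, there is a row-invariant functional
not vanishing at the latter. -/
lemma exists_rowInvariant_functional (hirr : ρ.IsIrred) {v w : V} (hv0 : v ≠ 0)
    (hv : ∀ r, PreservesRows r → ρ r v = v) (hw0 : w ≠ 0)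
    (hw : ∀ c, PreservesCols c → ρ c w = ((Equiv.Perm.sign c : ℤ) : ℂ) • w) :
    ∃ φ : V →ₗ[ℂ] ℂ, (∀ r, PreservesRows r → ∀ x, φ (ρ r x) = φ x) ∧ φ w ≠ 0 := by
  classical
  obtain ⟨φ₀, hφ₀⟩ : ∃ φ₀ : Dual ℂ V, φ₀ v ≠ 0 := by
    by_contra! h
    exact hv0 ((forall_dual_apply_eq_zero_iff ℂ v).1 h)
  let φ : V →ₗ[ℂ] ℂ := ∑ r : Equiv.Perm μ.cells with PreservesRows r, φ₀ ∘ₗ ρ r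
  have hφx : ∀ x, φ x = ∑ r : Equiv.Perm μ.cells with PreservesRows r, φ₀ (ρ r x) :=
    fun x => by simp [φ]
  have hφ : ∀ r, PreservesRows r → ∀ x, φ (ρ r x) = φ x := by
    intro r hr x
    rw [hφx, hφx]
    refine Finset.sum_bij' (fun g _ => g * r) (fun g _ => g * r⁻¹) ?_ ?_ (by simp) (by simp)
      (by simp)
    · intro g hg
      simpa using (Finset.mem_filter.1 hg).2.mul hr
    · intro g hg
      simpa using (Finset.mem_filter.1 hg).2.mul hr.inv
  refine ⟨φ, hφ, fun h0 => hw0 ?_⟩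
  have hφv : φ v ≠ 0 := by
    rw [hφx, Finset.sum_congr rfl fun r hr => by rw [hv r (Finset.mem_filter.1 hr).2],
      Finset.sum_const, nsmul_eq_mul]
    refine mul_ne_zero (Nat.cast_ne_zero.2 (Finset.card_pos.2 ⟨1, ?_⟩).ne') hφ₀
    exact Finset.mem_filter.2 ⟨Finset.mem_univ _, fun _ => rfl⟩
  refine eq_zero_of_coeff_eq_zero hirr (φ := φ) (fun h => hφv (by simp [h])) fun g => ?_
  by_contra hg
  obtain ⟨r, c, hr, hc, rfl⟩ := exists_eq_mul_of_coeff_ne_zero hw hφ hg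
  rw [coeff_mul hw hφ hr hc, h0, mul_zero] at hg
  exact hg rfl

end Invariants

section Blocks

lemma blockIdx_cons (a : ℕ) (l : List ℕ) (m : ℕ) :
    blockIdx (a :: l) m = if m < a then 0 else blockIdx l (m - a) + 1 := by
  unfold blockIdx
  rw [List.length_cons, List.range_succ_eq_map, List.filter_cons, List.filter_map]
  split_ifs with h1 h2 h2
  · simp at h1
    omega
  · simp only [List.length_cons, List.length_map]
    congr 2
    refine List.filter_congr fun j _ => ?_
    simp only [Function.comp_apply, List.take_succ_cons, List.sum_cons]
    refine decide_eq_decide.2 ?_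
    rw [Nat.succ_eq_add_one]
    omega
  · rw [List.length_map, List.length_eq_zero_iff, List.filter_eq_nil_iff]
    intro j _
    simp only [Function.comp_apply, List.take_succ_cons, List.sum_cons]
    refine decide_eq_true_iff.not.2 ?_
    omega
  · simp at h1
    omega

lemma card_filter_blockIdx (l : List ℕ) (i : ℕ) :
    ((Finset.range l.sum).filter fun m => blockIdx l m = i).card = l.getD i 0 := by
  induction l generalizing i with
  | nil => simp
  | cons a l ih =>
    cases i with
    | zero =>
      rw [List.getD_cons_zero]
      convert Finset.card_range a using 2
      ext m
      simp only [blockIdx_cons, Finset.mem_filter, Finset.mem_range, List.sum_cons]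
      grind
    | succ i =>
      rw [List.getD_cons_succ, ← ih i]
      refine Finset.card_bij' (fun m _ => m - a) (fun m _ => m + a) ?_ ?_ ?_ ?_ <;>
        simp only [blockIdx_cons, Finset.mem_filter, Finset.mem_range, List.sum_cons] <;>
        intro m hm
      · grind
      · rw [if_neg (by omega), Nat.add_sub_cancel]
        omega
      · grind
      · omega

lemma sum_rowLens : μ.rowLens.sum = μ.card := by
  rw [YoungDiagram.card, Finset.card_eq_sum_card_fiberwise (f := Prod.fst)
    (t := Finset.range (μ.colLen 0)), rowLens]
  · rw [show μ.rowLen = fun i => (μ.row i).card from funext fun i => μ.rowLen_eq_card]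
    rfl
  · intro x hx
    simpa using μ.mem_iff_lt_colLen.1 (μ.up_left_mem le_rfl (Nat.zero_le x.2) hx)

lemma getD_rowLens (i : ℕ) : μ.rowLens.getD i 0 = μ.rowLen i := by
  by_cases h : i < μ.rowLens.length
  · rw [List.getD_eq_getElem _ _ h, ← get_rowLens (h := h)]
  · rw [List.getD_eq_default _ _ (not_lt.1 h)]
    rw [length_rowLens, ← mem_iff_lt_colLen, mem_iff_lt_rowLen] at h
    omega

/-- The standard numbering of the cells, in which the rows are the consecutive blocks. -/
lemma exists_equiv_blockIdx_rowLens {N : ℕ} (hμ : μ.card = N) :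
    ∃ t : μ.cells ≃ Fin N, ∀ x, blockIdx μ.rowLens (t x) = x.1.1 := by
  obtain ⟨t, ht⟩ := exists_equiv_comp_eq_of_card_fiber_eq (fun x : μ.cells => x.1.1)
    (fun k : Fin N => blockIdx μ.rowLens k) fun i => by
      rw [card_filter_row_eq, ← getD_rowLens, ← card_filter_blockIdx, sum_rowLens, hμ]
      refine (Finset.card_nbij (fun k : Fin N => (k : ℕ)) ?_ ?_ ?_).symm
      · intro k
        simp
      · exact Fin.val_injective.injOn
      · intro m hm
        simp only [Finset.coe_filter, Finset.mem_range, Set.mem_ofPred_eq] at hm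
        exact ⟨⟨m, hm.1⟩, by simpa using hm.2, rfl⟩
  exact ⟨t, fun x => congrFun ht x⟩

lemma card_transpose : μ.transpose.card = μ.card := by
  refine Finset.card_nbij' Prod.swap Prod.swap ?_ ?_ (fun _ _ => rfl)
    fun _ _ => rfl
  · intro c hc
    simpa using hc
  · intro c hc
    simpa using hc

lemma exists_equiv_blockIdx_colLens {N : ℕ} (hμ : μ.card = N) :
    ∃ t : μ.cells ≃ Fin N, ∀ x, blockIdx μ.transpose.rowLens (t x) = x.1.2 := by
  obtain ⟨t, ht⟩ := exists_equiv_blockIdx_rowLens (card_transpose.trans hμ)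
  let s : μ.cells ≃ μ.transpose.cells :=
    (Equiv.prodComm ℕ ℕ).subtypeEquiv fun x => by simp
  exact ⟨s.trans t, fun x => ht (s x)⟩

end Blocks

section YoungRule

variable {V : Type*} [AddCommGroup V] [Module ℂ V] {N : ℕ}
  {ρ : Representation ℂ (Equiv.Perm (Fin N)) V}

/-- Young's rule, for the irreducible representation of `S_N` indexed by `μ`. -/
lemma finrank_invariants_eq_kostkaNumber (hμ : μ.card = N) (hirr : ρ.IsIrred)
    (htriv : ∃ v : V, v ≠ 0 ∧ ∀ σ : Equiv.Perm (Fin N),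
      IsInYoungSubgroup μ.rowLens σ → ρ σ v = v)
    (hsgn : ∃ v : V, v ≠ 0 ∧ ∀ σ : Equiv.Perm (Fin N),
      IsInYoungSubgroup μ.transpose.rowLens σ →
        ρ σ v = ((Equiv.Perm.sign σ : ℤ) : ℂ) • v)
    (f : Fin N → ℕ) (c : ℕ → ℕ) (hf : ∀ n, (Finset.univ.filter fun x => f x = n).card = c n)
    (W : Submodule ℂ V)
    (hW : ∀ x, x ∈ W ↔ ∀ σ : Equiv.Perm (Fin N), f ∘ σ = f → ρ σ x = x) :
    finrank ℂ W = kostkaNumber μ c := by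
  obtain ⟨t, ht⟩ := exists_equiv_blockIdx_rowLens hμ
  obtain ⟨t', ht'⟩ := exists_equiv_blockIdx_colLens hμ
  obtain ⟨v, hv0, hv⟩ := htriv
  obtain ⟨w, hw0, hw⟩ := hsgn
  let ρ' : Representation ℂ (Equiv.Perm μ.cells) V := ρ.comp t.permCongrHom.toMonoidHom
  have hρ' : ∀ g, ρ' g = ρ (t.permCongr g) := fun g => rfl
  have hirr' : ρ'.IsIrred := fun U hU => hirr U fun g x hx => by
    have := hU (t.symm.permCongr g) x hx
    rwa [hρ', ← Equiv.permCongr_symm, Equiv.apply_symm_apply] at this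
  have hv' : ∀ r, PreservesRows r → ρ' r v = v := fun r hr => by
    refine (congrArg (· v) (hρ' r)).trans (hv _ fun k => ?_)
    obtain ⟨x, rfl⟩ := t.surjective k
    rw [Equiv.permCongr_apply, Equiv.symm_apply_apply, ht, ht, hr]
  let s : Equiv.Perm (Fin N) := t'.symm.trans t
  have hw' : ∀ c, PreservesCols c →
      ρ' c (ρ s w) = ((Equiv.Perm.sign c : ℤ) : ℂ) • ρ s w := fun c hc => by
    have h1 : t.permCongr c * s = s * t'.permCongr c := by
      ext k
      simp [s]
    have h2 : IsInYoungSubgroup μ.transpose.rowLens (t'.permCongr c) := fun k => by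
      obtain ⟨x, rfl⟩ := t'.surjective k
      rw [Equiv.permCongr_apply, Equiv.symm_apply_apply, ht', ht', hc]
    rw [hρ', ← Module.End.mul_apply, ← map_mul, h1, map_mul, Module.End.mul_apply, hw _ h2,
      map_smul, Equiv.Perm.sign_permCongr]
  have hsw : ρ s w ≠ 0 := fun h => hw0 <| by
    simpa [h] using (ρ.inv_self_apply s w).symm
  obtain ⟨φ, hφ, hφe⟩ := exists_rowInvariant_functional hirr' hv0 hv' hsw hw'
  refine finrank_invariants_cells hirr' hw' hφ hφe (f ∘ t) c (fun n => ?_) W fun x => ?_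
  · rw [← hf n]
    refine Finset.card_equiv t fun x => ?_
    simp
  · rw [hW]
    refine ⟨fun h σ hσ => h _ (funext fun k => ?_), fun h σ hσ => ?_⟩
    · simpa using congrFun hσ (t.symm k)
    · have := h (t.permCongr.symm σ) (funext fun x => by
        simpa using congrFun hσ (t x))
      rwa [hρ', Equiv.apply_symm_apply] at this

end YoungRule

end YoungDiagram

section Reversal

variable {N : ℕ}

/-- The labelling of `{0, …, N - 1}` identifying `j` and `N - 1 - j` for `j < i`. -/
def foldLabel (i : ℕ) (k : Fin N) : ℕ :=
  if min (k : ℕ) k.rev < i then min (k : ℕ) k.rev else k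

/-- The involution exchanging `j` and `N - 1 - j` for all `j ∈ U`. -/
def partialRev (U : Finset ℕ) : Equiv.Perm (Fin N) :=
  Function.Involutive.toPerm (fun k => if min (k : ℕ) k.rev ∈ U then k.rev else k) fun k => by
    by_cases h : min (k : ℕ) k.rev ∈ U
    · simp only [if_pos h, Fin.rev_rev, min_comm (k.rev : ℕ) k]
    · simp only [if_neg h]

lemma partialRev_apply (U : Finset ℕ) (k : Fin N) :
    partialRev U k = if min (k : ℕ) k.rev ∈ U then k.rev else k := rfl

lemma card_filter_min_rev_eq {j : ℕ} (hj : j < N / 2) :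
    (Finset.univ.filter fun k : Fin N => min (k : ℕ) k.rev = j).card = 2 := by
  have hjN : j < N := by omega
  rw [Finset.card_eq_two]
  refine ⟨⟨j, hjN⟩, Fin.rev ⟨j, hjN⟩, fun h => ?_, ?_⟩
  · have := congrArg Fin.val h
    simp only [Fin.val_rev] at this
    omega
  · ext k
    simp only [Finset.mem_filter, Finset.mem_univ, true_and, Finset.mem_insert,
      Finset.mem_singleton, Fin.ext_iff, Fin.val_rev]
    omega

lemma card_filter_foldLabel_eq {i : ℕ} (hi : i ≤ N / 2) (j : ℕ) :
    (Finset.univ.filter fun k : Fin N => foldLabel i k = j).card = twoOneContent N i j := by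
  unfold twoOneContent foldLabel
  split_ifs with h1 h2
  · rw [← card_filter_min_rev_eq (N := N) (h1.trans_le hi)]
    congr 1
    ext k
    simp only [Finset.mem_filter, Finset.mem_univ, true_and, Fin.val_rev]
    split_ifs <;> omega
  · rw [Finset.card_eq_one]
    refine ⟨⟨j, by omega⟩, ?_⟩
    ext k
    simp only [Finset.mem_filter, Finset.mem_univ, true_and, Fin.val_rev, Finset.mem_singleton,
      Fin.ext_iff]
    split_ifs <;> omega
  · rw [Finset.card_eq_zero, Finset.filter_eq_empty_iff]
    intro k _
    rw [Fin.val_rev]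
    split_ifs <;> omega

lemma foldLabel_eq_iff {i : ℕ} (hi : i ≤ N / 2) (k l : Fin N) :
    foldLabel i k = foldLabel i l ↔ k = l ∨ k = l.rev ∧ min (l : ℕ) l.rev < i := by
  simp only [foldLabel, Fin.ext_iff, Fin.val_rev]
  split_ifs <;> omega

/-- The permutations preserving `foldLabel i` are the involutions `partialRev U` for
`U ⊆ {0, …, i - 1}`. -/
lemma sum_foldLabel_comp_eq {M : Type*} [AddCommMonoid M] {i : ℕ} (hi : i ≤ N / 2)
    (F : Equiv.Perm (Fin N) → M) :
    ∑ σ with foldLabel i ∘ (σ : Equiv.Perm (Fin N)) = foldLabel i, F σ =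
      ∑ U ∈ (Finset.range i).powerset, F (partialRev U) := by
  symm
  refine Finset.sum_bij' (fun U _ => partialRev U)
    (fun σ _ => (Finset.range i).filter fun j => ∃ h : j < N, σ ⟨j, h⟩ ≠ ⟨j, h⟩) ?_ ?_ ?_ ?_
    fun _ _ => rfl
  · intro U hU
    rw [Finset.mem_powerset] at hU
    refine Finset.mem_filter.2 ⟨Finset.mem_univ _, funext fun k => ?_⟩
    rw [Function.comp_apply, foldLabel_eq_iff hi, partialRev_apply]
    split_ifs with h
    · exact Or.inr ⟨rfl, Finset.mem_range.1 (hU h)⟩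
    · exact Or.inl rfl
  · intro σ _
    exact Finset.mem_powerset.2 (Finset.filter_subset _ _)
  · intro U hU
    rw [Finset.mem_powerset] at hU
    ext j
    rw [Finset.mem_filter, Finset.mem_range]
    have hrev : ∀ h : j < N, j < i →
        partialRev U ⟨j, h⟩ = if j ∈ U then Fin.rev ⟨j, h⟩ else ⟨j, h⟩ := fun h hj => by
      rw [partialRev_apply]
      refine if_congr (Eq.to_iff ?_) rfl rfl
      congr 1
      simp only [Fin.val_rev]
      omega
    constructor
    · rintro ⟨hj, h, hne⟩
      by_contra hU'
      exact hne (by rw [hrev h hj, if_neg hU'])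
    · intro hj
      have hji := Finset.mem_range.1 (hU hj)
      refine ⟨hji, by omega, ?_⟩
      rw [hrev _ hji, if_pos hj, Ne, Fin.ext_iff, Fin.val_rev]
      simp only
      omega
  · intro σ hσ
    have hσ' : ∀ k, σ k = k ∨ σ k = k.rev ∧ min (k : ℕ) k.rev < i := fun k =>
      (foldLabel_eq_iff hi _ _).1 (congrFun (Finset.mem_filter.1 hσ).2 k)
    ext1 k
    rw [partialRev_apply]
    have hlt : min (k : ℕ) k.rev < N := (min_le_left _ _).trans_lt k.2
    have hk : (⟨min (k : ℕ) k.rev, hlt⟩ : Fin N) = k ∨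
        (⟨min (k : ℕ) k.rev, hlt⟩ : Fin N) = k.rev := by
      simp only [Fin.ext_iff]
      omega
    have hmem : (min (k : ℕ) k.rev ∈
        (Finset.range i).filter fun j => ∃ h : j < N, σ ⟨j, h⟩ ≠ ⟨j, h⟩) ↔
        min (k : ℕ) k.rev < i ∧ σ ⟨min (k : ℕ) k.rev, hlt⟩ ≠ ⟨min (k : ℕ) k.rev, hlt⟩ := by
      rw [Finset.mem_filter, Finset.mem_range]
      exact and_congr_right' (exists_prop_of_true hlt)
    rw [if_congr hmem rfl rfl]
    have h1 := hσ' k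
    have h2 := hσ' k.rev
    rw [Fin.rev_rev] at h2
    have hinj : σ k = σ k.rev → k = k.rev := fun h => σ.injective h
    rcases hk with hk | hk <;> rw [hk] <;> split_ifs with h <;> grind

lemma card_support_partialRev {U : Finset ℕ} (hU : U ⊆ Finset.range (N / 2)) :
    (partialRev U : Equiv.Perm (Fin N)).support.card = U.card * 2 := by
  have hlt : ∀ j ∈ U, j < N / 2 := fun j hj => Finset.mem_range.1 (hU hj)
  have hmem : ∀ k : Fin N,
      k ∈ (partialRev U : Equiv.Perm (Fin N)).support ↔ min (k : ℕ) k.rev ∈ U := fun k => by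
    rw [Equiv.Perm.mem_support, partialRev_apply]
    split_ifs with h
    · refine iff_of_true (fun h' => ?_) h
      have h1 := hlt _ h
      have h2 := congrArg Fin.val h'
      rw [Fin.val_rev] at h1 h2
      omega
    · exact iff_of_false (fun h' => h' rfl) h
  rw [Finset.card_eq_sum_card_fiberwise (f := fun k : Fin N => min (k : ℕ) k.rev) (t := U)
    fun k hk => (hmem k).1 hk, ← smul_eq_mul, ← Finset.sum_const]
  refine Finset.sum_congr rfl fun j hj => ?_
  rw [← card_filter_min_rev_eq (hlt j hj)]
  congr 1
  ext k
  simp only [Finset.mem_filter, hmem, Finset.mem_univ, true_and, and_iff_right_iff_imp]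
  rintro rfl
  exact hj

lemma cycleType_partialRev {U : Finset ℕ} (hU : U ⊆ Finset.range (N / 2)) :
    (partialRev U : Equiv.Perm (Fin N)).cycleType = Multiset.replicate U.card 2 := by
  have h2 : ∀ c ∈ (partialRev U : Equiv.Perm (Fin N)).cycleType, c = 2 :=
    Equiv.Perm.pow_prime_eq_one_iff.1 <| Equiv.ext fun k => by
      rw [pow_two]
      exact Function.Involutive.toPerm_involutive _ k
  have hsum := Equiv.Perm.sum_cycleType (partialRev U : Equiv.Perm (Fin N))
  rw [Multiset.eq_replicate_card.2 h2, Multiset.sum_replicate, smul_eq_mul,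
    card_support_partialRev hU] at hsum
  rw [Multiset.eq_replicate_card.2 h2, Nat.eq_of_mul_eq_mul_right two_pos hsum]

lemma partialRev_range_half : (partialRev (Finset.range (N / 2)) : Equiv.Perm (Fin N)) =
    Fin.revPerm := by
  ext k
  rw [partialRev_apply, Fin.revPerm_apply]
  split_ifs with h
  · rfl
  · rw [Finset.mem_range, Fin.val_rev] at h
    rw [Fin.val_rev]
    omega

lemma sign_revPerm : Equiv.Perm.sign (Fin.revPerm : Equiv.Perm (Fin N)) = (-1) ^ (N / 2) := by
  rw [← partialRev_range_half, Equiv.Perm.sign_of_cycleType, cycleType_partialRev subset_rfl]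
  simp [pow_add, mul_comm _ 2, pow_mul]

end Reversal

section Representation

variable {V : Type*} [AddCommGroup V] [Module ℂ V]

/-- The tensor product of a representation of a symmetric group with the sign. -/
def Representation.signTwist {α : Type*} [Fintype α] [DecidableEq α]
    (ρ : Representation ℂ (Equiv.Perm α) V) : Representation ℂ (Equiv.Perm α) V where
  toFun g := ((Equiv.Perm.sign g : ℤ) : ℂ) • ρ g
  map_one' := by simp
  map_mul' g h := by simp [smul_smul, mul_comm]

lemma Representation.signTwist_apply {α : Type*} [Fintype α] [DecidableEq α]
    (ρ : Representation ℂ (Equiv.Perm α) V) (g : Equiv.Perm α) :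
    ρ.signTwist g = ((Equiv.Perm.sign g : ℤ) : ℂ) • ρ g := rfl

lemma sign_mul_self_complex {α : Type*} [Fintype α] [DecidableEq α] (g : Equiv.Perm α) :
    ((Equiv.Perm.sign g : ℤ) : ℂ) * ((Equiv.Perm.sign g : ℤ) : ℂ) = 1 := by
  rw [← Int.cast_mul, ← Units.val_mul, Int.units_mul_self]
  simp

lemma Representation.IsIrred.signTwist {α : Type*} [Fintype α] [DecidableEq α]
    {ρ : Representation ℂ (Equiv.Perm α) V} (hirr : ρ.IsIrred) : ρ.signTwist.IsIrred :=
  fun U hU => hirr U fun g x hx => by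
    have := U.smul_mem ((Equiv.Perm.sign g : ℤ) : ℂ) (hU g x hx)
    rwa [Representation.signTwist_apply, LinearMap.smul_apply, smul_smul, sign_mul_self_complex,
      one_smul] at this

/-- The dimension of the invariants of the group of permutations fixing a labelling `f` is the
average of the character over this group. -/
lemma exists_invariants_finrank_eq [FiniteDimensional ℂ V] {α ι : Type*} [Fintype α]
    [DecidableEq α] [DecidableEq ι] (ρ : Representation ℂ (Equiv.Perm α) V) (f : α → ι) :
    ∃ W : Submodule ℂ V, (∀ x, x ∈ W ↔ ∀ σ : Equiv.Perm α, f ∘ σ = f → ρ σ x = x) ∧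
      ((Finset.univ.filter fun σ : Equiv.Perm α => f ∘ σ = f).card : ℂ) * finrank ℂ W =
        ∑ σ with f ∘ (σ : Equiv.Perm α) = f, LinearMap.trace ℂ V (ρ σ) := by
  let H : Subgroup (Equiv.Perm α) :=
    { carrier := {σ | f ∘ σ = f}
      one_mem' := rfl
      mul_mem' := fun {σ τ} hσ hτ => by
        simp only [Set.mem_ofPred_eq] at hσ hτ ⊢
        rw [Equiv.Perm.coe_mul, ← Function.comp_assoc, hσ, hτ]
      inv_mem' := fun {σ} hσ => by
        simp only [Set.mem_ofPred_eq] at hσ ⊢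
        nth_rewrite 1 [← hσ]
        funext x
        simp }
  have hH : ∀ σ, σ ∈ Finset.univ.filter (fun σ : Equiv.Perm α => f ∘ σ = f) ↔ σ ∈ H :=
    fun σ => by
      rw [Finset.mem_filter]
      exact and_iff_right (Finset.mem_univ _)
  classical
  let ρH : Representation ℂ H V := ρ.comp H.subtype
  refine ⟨ρH.invariants, fun x => ?_, ?_⟩
  · rw [Representation.mem_invariants]
    exact ⟨fun h σ hσ => h ⟨σ, hσ⟩, fun h σ => h σ.1 σ.2⟩
  · rw [Finset.sum_subtype _ hH, ← Representation.card_inv_mul_sum_char_eq_finrank ρH,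
      Nat.card_eq_fintype_card, Fintype.card_of_subtype _ hH, mul_inv_cancel_left₀]
    · rfl
    · exact Nat.cast_ne_zero.2 (Finset.card_pos.2 ⟨1, (hH 1).2 H.one_mem⟩).ne'

end Representation

open Polynomial in
/-- A form of binomial inversion. -/
lemma sum_neg_two_pow_mul_choose_mul {R : Type*} [CommRing R] (r : ℕ) (X d : ℕ → R)
    (h : ∀ i ≤ r, 2 ^ i * d i = ∑ m ∈ Finset.range (i + 1), (i.choose m : R) * X m) :
    ∑ i ∈ Finset.range (r + 1), (-2) ^ i * (r.choose i : R) * d i = (-1) ^ r * X r := by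
  let L : R[X] →ₗ[R] R := Polynomial.lsum fun m => X m • LinearMap.id
  have hL : ∀ (a : R) (m : ℕ), L (C a * Polynomial.X ^ m) = a * X m := fun a m => by
    rw [C_mul_X_pow_eq_monomial, Polynomial.lsum_apply, sum_monomial_index] <;> simp [mul_comm]
  have hL' : ∀ i, L ((Polynomial.X + 1) ^ i) =
      ∑ m ∈ Finset.range (i + 1), (i.choose m : R) * X m := fun i => by
    rw [add_pow, map_sum]
    refine Finset.sum_congr rfl fun m _ => ?_
    rw [← hL, one_pow, mul_one, mul_comm, map_natCast]
  have hr : L ((1 + C (-1) * (Polynomial.X + 1)) ^ r) = (-1) ^ r * X r := by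
    rw [← hL]
    congr 1
    simp only [map_neg, map_one, map_pow]
    rw [← mul_pow]
    ring
  rw [← hr, add_comm 1 (C (-1) * _), add_pow, map_sum]
  refine Finset.sum_congr rfl fun i hi => ?_
  have hC : (C (-1) * (Polynomial.X + 1)) ^ i * 1 ^ (r - i) * (r.choose i : R[X]) =
      ((-1) ^ i * (r.choose i : R)) • (Polynomial.X + 1) ^ i := by
    rw [smul_eq_C_mul, one_pow, mul_one, mul_pow, map_mul, map_pow, map_natCast]
    ring
  rw [hC, map_smul, hL', ← h i (Finset.mem_range_succ_iff.1 hi), smul_eq_mul, neg_pow (2 : R)]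
  ring

/-- Let `w₀` be the longest element of `S_N` (the order-reversing permutation), let `λ`
(here: a Young diagram `μ` with `N` cells) be a partition of `N` with irreducible
character `χ_λ` — where the irreducible representation `π_λ` is characterized by being
irreducible, containing the trivial representation upon restriction to the Young subgroup
`S_λ` and the sign representation upon restriction to `S_{λᵗ}` — and set `r = ⌊N/2⌋`.
Then `χ_λ(w₀) = Σ_{i=0}^{r} (−2)^i C(r,i) K_{λᵗ, (2^i,1^{N−2i})}`. -/
theorem character_longest_element_eq_kostka_sum (N : ℕ) (μ : YoungDiagram) (hμ : μ.card = N)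
    {V : Type*} [AddCommGroup V] [Module ℂ V] [FiniteDimensional ℂ V] [Nontrivial V]
    (ρ : Representation ℂ (Equiv.Perm (Fin N)) V) (hirr : ρ.IsIrred)
    (htriv : ∃ v : V, v ≠ 0 ∧ ∀ σ : Equiv.Perm (Fin N),
      IsInYoungSubgroup μ.rowLens σ → ρ σ v = v)
    (hsgn : ∃ v : V, v ≠ 0 ∧ ∀ σ : Equiv.Perm (Fin N),
      IsInYoungSubgroup μ.transpose.rowLens σ →
        ρ σ v = ((Equiv.Perm.sign σ : ℤ) : ℂ) • v) :
    LinearMap.trace ℂ V (ρ (Fin.revPerm : Equiv.Perm (Fin N))) =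
      ∑ i ∈ Finset.range (N / 2 + 1),
        ((-2 : ℂ)) ^ i * ((N / 2).choose i) * (kostkaNumber μ.transpose (twoOneContent N i)) := by
  have hN : μ.transpose.card = N := YoungDiagram.card_transpose.trans hμ
  have htriv' : ∃ v : V, v ≠ 0 ∧ ∀ σ : Equiv.Perm (Fin N),
      IsInYoungSubgroup μ.transpose.rowLens σ → ρ.signTwist σ v = v := by
    obtain ⟨v, hv0, hv⟩ := hsgn
    refine ⟨v, hv0, fun σ hσ => ?_⟩
    rw [Representation.signTwist_apply, LinearMap.smul_apply, hv σ hσ, smul_smul,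
      sign_mul_self_complex, one_smul]
  have hsgn' : ∃ v : V, v ≠ 0 ∧ ∀ σ : Equiv.Perm (Fin N),
      IsInYoungSubgroup μ.transpose.transpose.rowLens σ →
        ρ.signTwist σ v = ((Equiv.Perm.sign σ : ℤ) : ℂ) • v := by
    obtain ⟨v, hv0, hv⟩ := htriv
    refine ⟨v, hv0, fun σ hσ => ?_⟩
    rw [YoungDiagram.transpose_transpose] at hσ
    rw [Representation.signTwist_apply, LinearMap.smul_apply, hv σ hσ]
  have hconj : ∀ U ⊆ Finset.range (N / 2), LinearMap.trace ℂ V (ρ.signTwist (partialRev U)) =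
      LinearMap.trace ℂ V (ρ.signTwist (partialRev (Finset.range U.card))) := fun U hU => by
    have hcard : Finset.range U.card ⊆ Finset.range (N / 2) :=
      Finset.range_subset_range.2 ((Finset.card_le_card hU).trans (Finset.card_range _).le)
    obtain ⟨g, hg⟩ := isConj_iff.1 (Equiv.Perm.isConj_iff_cycleType_eq.2
      ((cycleType_partialRev (N := N) hU).trans
        (by rw [cycleType_partialRev hcard, Finset.card_range])))
    rw [← hg]
    exact (ρ.signTwist.char_conj _ g).symm
  rw [sum_neg_two_pow_mul_choose_mul (N / 2)
    (fun m => LinearMap.trace ℂ V (ρ.signTwist (partialRev (Finset.range m))))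
    (fun i => (kostkaNumber μ.transpose (twoOneContent N i) : ℂ)) fun i hi => ?_]
  · rw [partialRev_range_half, Representation.signTwist_apply, map_smul, sign_revPerm,
      smul_eq_mul, ← mul_assoc]
    push_cast
    rw [← mul_pow]
    simp
  · obtain ⟨W, hW, hfin⟩ := exists_invariants_finrank_eq ρ.signTwist (foldLabel (N := N) i)
    rw [YoungDiagram.finrank_invariants_eq_kostkaNumber hN hirr.signTwist htriv' hsgn' _ _
      (card_filter_foldLabel_eq hi) W hW, Finset.card_eq_sum_ones, sum_foldLabel_comp_eq hi,
      sum_foldLabel_comp_eq hi, Finset.sum_congr rfl fun U hU => hconj U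
        ((Finset.mem_powerset.1 hU).trans (Finset.range_subset_range.2 hi)),
      Finset.sum_powerset_apply_card fun m =>
        LinearMap.trace ℂ V (ρ.signTwist (partialRev (Finset.range m)))] at hfin
    simpa using hfin
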